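/- arXiv:1403.4137 — 2 statements merged into one kernel-verified Lean document; each statement's English description precedes it below -/
import Mathlib

section
/- Let p be a prime, m, q, k natural numbers with 0 ≤ k < p^m, and let a, b, c be natural numbers with a + b + c = p^m·q + k and a + c ≤ p^m. If b < p^m·q, and (a,c) ≠ (p^m, 0), and (a,c) ≠ (0, p^m), then Γ(a,b,c) is congruent to 0 modulo p, i.e. the p-adic norm of the rational number Γ(a,b,c) is at most 1/p. -/
/-- `mAngle p m k k'` is the number `⟨k, k'⟩ = q!/(q'!·q''!)` where
`q = ⌊k/p^m⌋`, `q' = ⌊k'/p^m⌋` and `q'' = ⌊(k-k')/p^m⌋`. -/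
def mAngle (p m k k' : ℕ) : ℚ :=
  (Nat.factorial (k / p ^ m) : ℚ) /
    ((Nat.factorial (k' / p ^ m) : ℚ) * (Nat.factorial ((k - k') / p ^ m) : ℚ))

/-- `mPartialBinom p m k k'` is the level-`m` partial binomial
`⦃k, k'⦄ = C(k, k') / ⟨k, k'⟩`. -/
def mPartialBinom (p m k k' : ℕ) : ℚ :=
  (Nat.choose k k' : ℚ) / mAngle p m k k'

/-- `mGamma p m a b c` is the number `Γ(a,b,c) = ⦃a+b+c, a⦄·⦃b+c, b⦄·⟨a+b, a⟩·⟨a+c, a⟩`. -/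
def mGamma (p m a b c : ℕ) : ℚ :=
  mPartialBinom p m (a + b + c) a * mPartialBinom p m (b + c) b *
    mAngle p m (a + b) a * mAngle p m (a + c) a

/-!
By Legendre's formula the quotient `n! / ⌊n / p ^ m⌋!` has `p`-adic valuation
`∑ i ∈ Icc 1 m, ⌊n / p ^ i⌋`, so the valuation of `⦃x + y, x⦄` counts the carries among the lowest
`m` base-`p` digits in the addition `x + y`. In particular `⦃x + y, x⦄` is `p`-integral, and so is
the integer `⟨x + y, x⟩`. When `⌊(a + b + c) / p ^ m⌋` exceeds
`⌊a / p ^ m⌋ + ⌊b / p ^ m⌋ + ⌊c / p ^ m⌋`, there is a carry out of the lowest `m` digits in `b + c`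
or in `a + (b + c)`, which makes one of the two partial binomials in `Γ(a,b,c)` divisible by `p`.
The bounds on `a + c` and `b`, with the two pairs excluded, force such a carry: they give
`⌊a / p ^ m⌋ = ⌊c / p ^ m⌋ = 0` and `⌊b / p ^ m⌋ < q`.
-/

open Finset
open scoped Nat

theorem div_add_div_add_div_lt_add_add_div {n q a b c : ℕ} (ha : a < n) (hc : c < n)
    (hb : b < n * q) (hq : n * q ≤ a + b + c) : a / n + b / n + c / n < (a + b + c) / n := by
  rw [Nat.div_eq_of_lt ha, Nat.div_eq_of_lt hc, zero_add, add_zero]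
  calc b / n < q := Nat.div_lt_of_lt_mul hb
    _ ≤ (a + b + c) / n := (Nat.le_div_iff_mul_le (Nat.zero_lt_of_lt ha)).2 (mul_comm n q ▸ hq)

theorem mAngle_ne_zero {p m k k' : ℕ} : mAngle p m k k' ≠ 0 := by
  unfold mAngle
  positivity

theorem mPartialBinom_add_left_ne_zero {p m x y : ℕ} : mPartialBinom p m (x + y) x ≠ 0 :=
  div_ne_zero (Nat.cast_ne_zero.2 (Nat.choose_ne_zero (Nat.le_add_right x y))) mAngle_ne_zero

theorem exists_natCast_eq_mAngle_add_left (p m x y : ℕ) :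
    ∃ t : ℕ, (t : ℚ) = mAngle p m (x + y) x := by
  have hdvd : (x / p ^ m)! * (y / p ^ m)! ∣ ((x + y) / p ^ m)! :=
    (Nat.factorial_mul_factorial_dvd_factorial_add _ _).trans
      (Nat.factorial_dvd_factorial Nat.div_add_div_le_add_div)
  refine ⟨((x + y) / p ^ m)! / ((x / p ^ m)! * (y / p ^ m)!), ?_⟩
  rw [mAngle, Nat.add_sub_cancel_left, Nat.cast_div hdvd (by positivity), Nat.cast_mul]

theorem padicValRat_mAngle_add_left_nonneg (p m x y : ℕ) :
    0 ≤ padicValRat p (mAngle p m (x + y) x) := by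
  obtain ⟨t, ht⟩ := exists_natCast_eq_mAngle_add_left p m x y
  rw [← ht, padicValRat.of_nat]
  exact Int.natCast_nonneg _

section Valuation

variable {p : ℕ} [Fact p.Prime] (m : ℕ)

theorem padicValNat_factorial_eq_sum_div_add (n : ℕ) :
    padicValNat p n ! = ∑ i ∈ Icc 1 m, n / p ^ i + padicValNat p (n / p ^ m)! := by
  induction m with
  | zero => simp
  | succ m ih =>
    calc
      padicValNat p n ! = ∑ i ∈ Icc 1 m, n / p ^ i + padicValNat p (n / p ^ m)! := ih
      _ = ∑ i ∈ Icc 1 m, n / p ^ i + (n / p ^ m / p + padicValNat p (n / p ^ m / p)!) := by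
        rw [← padicValNat_mul_div_factorial (n / p ^ m), padicValNat_factorial_mul,
          add_comm (padicValNat _ _)]
      _ = ∑ i ∈ Icc 1 (m + 1), n / p ^ i + padicValNat p (n / p ^ (m + 1))! := by
        rw [sum_Icc_succ_top (Nat.le_add_left 1 m), pow_succ, ← Nat.div_div_eq_div_mul, add_assoc]

theorem padicValRat_mAngle_add_left (x y : ℕ) :
    padicValRat p (mAngle p m (x + y) x) =
      padicValNat p ((x + y) / p ^ m)! -
        (padicValNat p (x / p ^ m)! + padicValNat p (y / p ^ m)!) := by
  rw [mAngle, Nat.add_sub_cancel_left, padicValRat.div (by positivity) (by positivity),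
    padicValRat.mul (by positivity) (by positivity)]
  simp only [padicValRat.of_nat]

theorem padicValRat_mPartialBinom_add_left (x y : ℕ) :
    padicValRat p (mPartialBinom p m (x + y) x) =
      ∑ i ∈ Icc 1 m, (((x + y) / p ^ i : ℕ) - ((x / p ^ i : ℕ) + (y / p ^ i : ℕ)) : ℤ) := by
  have hchoose : padicValRat p ((x + y).choose x) =
      padicValNat p (x + y)! - (padicValNat p x ! + padicValNat p y !) := by
    -- At level `0` the symbol `⟨x + y, x⟩` is the binomial coefficient itself.
    simpa [mAngle, Nat.cast_add_choose] using padicValRat_mAngle_add_left (p := p) 0 x y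
  rw [mPartialBinom,
    padicValRat.div (Nat.cast_ne_zero.2 (Nat.choose_ne_zero (Nat.le_add_right x y)))
      mAngle_ne_zero,
    hchoose, padicValRat_mAngle_add_left, padicValNat_factorial_eq_sum_div_add m (x + y),
    padicValNat_factorial_eq_sum_div_add m x, padicValNat_factorial_eq_sum_div_add m y,
    sum_sub_distrib, sum_add_distrib]
  push_cast
  ring

theorem padicValRat_mPartialBinom_add_left_nonneg (x y : ℕ) :
    0 ≤ padicValRat p (mPartialBinom p m (x + y) x) := by
  rw [padicValRat_mPartialBinom_add_left]
  exact sum_nonneg fun i _ ↦ sub_nonneg.2 (mod_cast Nat.div_add_div_le_add_div)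

theorem padicValRat_mPartialBinom_add_left_pos {m x y : ℕ}
    (hcarry : x / p ^ m + y / p ^ m < (x + y) / p ^ m) :
    0 < padicValRat p (mPartialBinom p m (x + y) x) := by
  have hm : 1 ≤ m := Nat.one_le_iff_ne_zero.2 (by rintro rfl; simp at hcarry)
  rw [padicValRat_mPartialBinom_add_left]
  exact sum_pos' (fun i _ ↦ sub_nonneg.2 (mod_cast Nat.div_add_div_le_add_div))
    ⟨m, right_mem_Icc.2 hm, sub_pos.2 (mod_cast hcarry)⟩

theorem padicValRat_mGamma (a b c : ℕ) :
    padicValRat p (mGamma p m a b c) =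
      padicValRat p (mPartialBinom p m (a + (b + c)) a) +
        padicValRat p (mPartialBinom p m (b + c) b) +
        padicValRat p (mAngle p m (a + b) a) + padicValRat p (mAngle p m (a + c) a) := by
  have hbinom : mPartialBinom p m (a + (b + c)) a * mPartialBinom p m (b + c) b ≠ 0 :=
    mul_ne_zero mPartialBinom_add_left_ne_zero mPartialBinom_add_left_ne_zero
  rw [mGamma, add_assoc a b c,
    padicValRat.mul (mul_ne_zero hbinom mAngle_ne_zero) mAngle_ne_zero,
    padicValRat.mul hbinom mAngle_ne_zero,
    padicValRat.mul mPartialBinom_add_left_ne_zero mPartialBinom_add_left_ne_zero]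

theorem padicValRat_mGamma_pos {m a b c : ℕ}
    (hcarry : a / p ^ m + b / p ^ m + c / p ^ m < (a + b + c) / p ^ m) :
    0 < padicValRat p (mGamma p m a b c) := by
  have habc := padicValRat_mPartialBinom_add_left_nonneg (p := p) m a (b + c)
  have hbc := padicValRat_mPartialBinom_add_left_nonneg (p := p) m b c
  have hab := padicValRat_mAngle_add_left_nonneg p m a b
  have hac := padicValRat_mAngle_add_left_nonneg p m a c
  rw [add_assoc a b c] at hcarry
  rw [padicValRat_mGamma]
  rcases lt_or_ge (b / p ^ m + c / p ^ m) ((b + c) / p ^ m) with hlow | hlow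
  · linarith [padicValRat_mPartialBinom_add_left_pos hlow]
  · have houter : a / p ^ m + (b + c) / p ^ m < (a + (b + c)) / p ^ m := by lia
    linarith [padicValRat_mPartialBinom_add_left_pos houter]

theorem padicNorm_le_one_div_of_padicValRat_pos {x : ℚ} (hx : 0 < padicValRat p x) :
    padicNorm p x ≤ 1 / p := by
  have hx0 : x ≠ 0 := by rintro rfl; simp at hx
  rw [padicNorm.eq_zpow_of_nonzero hx0, one_div, ← zpow_neg_one]
  exact zpow_le_zpow_right₀ (mod_cast (Fact.out : p.Prime).one_le) (by lia)

end Valuation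

theorem gamma_zero_mod_p_general {p m a b c : ℕ} (hp : p.Prime)
    (hcarry : a / p ^ m + b / p ^ m + c / p ^ m < (a + b + c) / p ^ m) :
    padicNorm p (mGamma p m a b c) ≤ 1 / p :=
  have := Fact.mk hp
  padicNorm_le_one_div_of_padicValRat_pos (padicValRat_mGamma_pos hcarry)

theorem gamma_zero_mod_p (p m q k a b c : ℕ) (hp : p.Prime) (hk : k < p ^ m)
    (habc : a + b + c = p ^ m * q + k) (hac : a + c ≤ p ^ m)
    (hb : b < p ^ m * q) (h1 : (a, c) ≠ (p ^ m, 0)) (h2 : (a, c) ≠ (0, p ^ m)) :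
    padicNorm p (mGamma p m a b c) ≤ 1 / p := by
  have ha : a < p ^ m := by grind
  have hc : c < p ^ m := by grind
  exact gamma_zero_mod_p_general hp (div_add_div_add_div_lt_add_add_div ha hc hb (by lia))
end

section
/- Let p be a prime, m a natural number, and let q ≥ 1 and k be natural numbers with 0 ≤ k < p^m. Then Γ(0, p^m·(q−1) + k, p^m) is congruent to 1 modulo p, i.e. the p-adic norm of the rational number Γ(0, p^m·(q−1) + k, p^m) − 1 is at most 1/p. -/
/-!
Write `P = p ^ m` and `b = P * r + k` with `k < P`. The number `Γ(0, b, P)` collapses to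
`C(b + P, P) / (r + 1)`. Lucas' theorem alone does not evaluate this modulo `p`, since `p` may
divide `r + 1`. Choosing disjoint subsets of sizes `k` and `P` of a set of `P * (r + 1) + k`
elements in either order, and extracting the factor `r + 1` from
`C(P * (r + 1), P) = (r + 1) * C(P * r + P - 1, P - 1)`, gives
`C(b + P, P) * C(P * r + k, k) = (r + 1) * C(P * r + P - 1, P - 1) * C(P * (r + 1) + k, k)`.
Hence `Γ(0, b, P)` is a quotient of products of binomial coefficients `C(P * s + j, j)` with
`j < P`, and each of these is `1` modulo `p` by Lucas' theorem.
-/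

theorem mod_pow_div_pow_mod {i m : ℕ} (hi : i < m) (p x : ℕ) :
    x % p ^ m / p ^ i % p = x / p ^ i % p := by
  obtain ⟨t, rfl⟩ := Nat.exists_eq_add_of_lt hi
  rw [add_assoc, pow_add, Nat.mod_mul_right_div_self, pow_succ, Nat.mod_mul_left_mod]

section Lucas

variable {p : ℕ} [Fact p.Prime]

theorem choose_modEq_choose_mod_pow_mul_choose_div_pow (m n k : ℕ) :
    n.choose k ≡
      (n % p ^ m).choose (k % p ^ m) * (n / p ^ m).choose (k / p ^ m) [ZMOD p] := by
  have hP : 0 < p ^ m := pow_pos (Fact.out : p.Prime).pos m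
  have lucas_mod := Choose.choose_modEq_prod_range_choose (p := p)
    (Nat.mod_lt n hP) (Nat.mod_lt k hP)
  have same_digits :
      ∏ i ∈ Finset.range m, ((n % p ^ m / p ^ i % p).choose (k % p ^ m / p ^ i % p) : ℤ) =
        ∏ i ∈ Finset.range m, ((n / p ^ i % p).choose (k / p ^ i % p) : ℤ) := by
    refine Finset.prod_congr rfl fun i hi ↦ ?_
    have hi := Finset.mem_range.mp hi
    rw [mod_pow_div_pow_mod hi, mod_pow_div_pow_mod hi]
  rw [same_digits] at lucas_mod
  grw [Choose.choose_modEq_choose_mul_prod_range_choose m, lucas_mod]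
  push_cast
  rw [mul_comm]

theorem choose_pow_mul_add_modEq_one {m j : ℕ} (r : ℕ) (hj : j < p ^ m) :
    (p ^ m * r + j).choose j ≡ 1 [ZMOD p] := by
  simpa [Nat.mod_eq_of_lt hj, Nat.div_eq_of_lt hj] using
    choose_modEq_choose_mod_pow_mul_choose_div_pow (p := p) m (p ^ m * r + j) j

end Lucas

theorem choose_add_add_mul_choose_add_comm (a k l : ℕ) :
    (a + k + l).choose l * (a + k).choose k = (a + l + k).choose k * (a + l).choose l :=
  calc (a + k + l).choose l * (a + k).choose k
    _ = (a + k + l).choose (k + l) * (k + l).choose l := by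
      rw [Nat.choose_mul (Nat.le_add_left l k), Nat.add_sub_cancel, Nat.add_sub_cancel]
    _ = (a + l + k).choose (l + k) * (l + k).choose k := by
      rw [add_right_comm, add_comm k l, Nat.choose_symm_add]
    _ = (a + l + k).choose k * (a + l).choose l := by
      rw [Nat.choose_mul (Nat.le_add_left k l), Nat.add_sub_cancel, Nat.add_sub_cancel]

theorem choose_mul_add_add_mul_choose {N : ℕ} (hN : N ≠ 0) (r k : ℕ) :
    (N * r + k + N).choose N * (N * r + k).choose k =
      (r + 1) * ((N * r + (N - 1)).choose (N - 1) * (N * (r + 1) + k).choose k) := by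
  have absorb : (N * r + N).choose N = (r + 1) * (N * r + (N - 1)).choose (N - 1) := by
    rw [mul_comm N r, Nat.choose_mul_add hN, Nat.add_sub_assoc (Nat.one_le_iff_ne_zero.mpr hN)]
  rw [choose_add_add_mul_choose_add_comm, absorb, mul_add_one]
  ring

theorem padicNorm_div_sub_one_le {p : ℕ} [Fact p.Prime] {n : ℕ} {a b : ℤ}
    (hab : a ≡ b [ZMOD (p ^ n : ℕ)]) (hb : ¬ (p : ℤ) ∣ b) :
    padicNorm p (a / b - 1) ≤ (p : ℚ) ^ (-n : ℤ) := by
  have hb0 : (b : ℚ) ≠ 0 := Int.cast_ne_zero.mpr fun h ↦ hb (h ▸ dvd_zero _)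
  rw [div_sub_one hb0, padicNorm.div, (padicNorm.int_eq_one_iff b).mpr hb, div_one,
    ← Int.cast_sub, ← padicNorm.dvd_iff_norm_le]
  exact hab.symm.dvd

section Gamma

variable (p m : ℕ)

theorem mAngle_zero_right (k : ℕ) : mAngle p m k 0 = 1 := by
  simp [mAngle, Nat.factorial_ne_zero]

theorem mPartialBinom_zero_right (k : ℕ) : mPartialBinom p m k 0 = 1 := by
  simp [mPartialBinom, mAngle_zero_right]

theorem mGamma_zero_left (b c : ℕ) : mGamma p m 0 b c = mPartialBinom p m (b + c) b := by
  simp [mGamma, mPartialBinom_zero_right, mAngle_zero_right]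

variable {p m}

theorem mAngle_add_pow (hP : 0 < p ^ m) (b : ℕ) :
    mAngle p m (b + p ^ m) b = (b / p ^ m : ℕ) + 1 := by
  simp [mAngle, Nat.add_div_right _ hP, Nat.div_self hP, Nat.factorial_succ,
    Nat.factorial_ne_zero]

theorem mGamma_zero_pow_eq_choose_div (hP : 0 < p ^ m) (b : ℕ) :
    mGamma p m 0 b (p ^ m) = (b + p ^ m).choose (p ^ m) / ((b / p ^ m : ℕ) + 1) := by
  rw [mGamma_zero_left, mPartialBinom, mAngle_add_pow hP, Nat.choose_symm_add]

theorem mGamma_zero_pow_eq_choose_mul_choose_div_choose {k : ℕ} (r : ℕ) (hk : k < p ^ m) :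
    mGamma p m 0 (p ^ m * r + k) (p ^ m) =
      ((p ^ m * r + (p ^ m - 1)).choose (p ^ m - 1) * (p ^ m * (r + 1) + k).choose k : ℕ) /
        ((p ^ m * r + k).choose k : ℕ) := by
  have hP : 0 < p ^ m := Nat.zero_lt_of_lt hk
  have hchoose : ((p ^ m * r + k).choose k : ℚ) ≠ 0 :=
    mod_cast (Nat.choose_pos (Nat.le_add_left ..)).ne'
  rw [mGamma_zero_pow_eq_choose_div hP, Nat.mul_add_div hP, Nat.div_eq_of_lt hk, add_zero,
    div_eq_div_iff (by positivity) hchoose, mul_comm (Nat.cast _) ((r : ℚ) + 1)]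
  exact_mod_cast choose_mul_add_add_mul_choose hP.ne' r k

end Gamma

theorem gamma_eq_one_mod_p_general (p m b : ℕ) (hp : p.Prime) :
    padicNorm p (mGamma p m 0 b (p ^ m) - 1) ≤ 1 / p := by
  have : Fact p.Prime := ⟨hp⟩
  have hP : 0 < p ^ m := pow_pos hp.pos m
  have hk : b % p ^ m < p ^ m := Nat.mod_lt b hP
  have block := choose_pow_mul_add_modEq_one (b / p ^ m) (Nat.sub_one_lt hP.ne')
  have num := choose_pow_mul_add_modEq_one (b / p ^ m + 1) hk
  have den := choose_pow_mul_add_modEq_one (b / p ^ m) hk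
  have not_dvd : ¬ (p : ℤ) ∣ ((p ^ m * (b / p ^ m) + b % p ^ m).choose (b % p ^ m) : ℤ) := by
    rw [den.dvd_iff]
    exact mod_cast hp.not_dvd_one
  have quotient := padicNorm_div_sub_one_le (n := 1)
    (by simpa using (block.mul num).trans den.symm) not_dvd
  rw [← Nat.div_add_mod b (p ^ m), mGamma_zero_pow_eq_choose_mul_choose_div_choose _ hk]
  simpa using quotient

theorem gamma_eq_one_mod_p (p m q k : ℕ) (hp : p.Prime) (hq : 1 ≤ q) (hk : k < p ^ m) :
    padicNorm p (mGamma p m 0 (p ^ m * (q - 1) + k) (p ^ m) - 1) ≤ 1 / p :=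
  gamma_eq_one_mod_p_general p m _ hp
end
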